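/- Let q be a prime power and let f, g be monic irreducible homogeneous polynomials in F_q[x,y] each of degree at least 4. If Cross(f) = Cross(g), then f and g lie in the same orbit under the action of PGL₂(F_q). -/

import Mathlib

open MvPolynomial

/-- The dehomogenization `f(x,1)` of a bivariate polynomial. -/
noncomputable def dehom {F : Type*} [CommRing F] (f : MvPolynomial (Fin 2) F) :
    Polynomial F :=
  MvPolynomial.aeval ![Polynomial.X, 1] f

/-- A homogeneous bivariate polynomial of degree `n` is monic if the coefficient of
`x^n` is `1` (equivalently, `f(x,1)` is monic of degree `n`). -/
def MonicHom {F : Type*} [CommRing F] (f : MvPolynomial (Fin 2) F) (n : ℕ) : Prop :=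
  MvPolynomial.coeff (Finsupp.single (0 : Fin 2) n) f = 1

/-- Linear substitution of the variables of a bivariate polynomial by a matrix `N`:
`(substM N f)(v) = f(N·v)`. -/
noncomputable def substM {F : Type*} [Field F]
    (N : Matrix (Fin 2) (Fin 2) F) (f : MvPolynomial (Fin 2) F) :
    MvPolynomial (Fin 2) F :=
  MvPolynomial.aeval (fun i => C (N i 0) * X 0 + C (N i 1) * X 1) f

/-- The cross ratio `χ` of the first four Frobenius conjugates `α, α^q, α^{q²}, α^{q³}`
of `α`. -/
noncomputable def crossRatio {K : Type*} [Field K] (q : ℕ) (α : K) : K :=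
  ((α ^ q ^ 3 - α ^ q) * (α ^ q ^ 2 - α)) /
    ((α ^ q ^ 3 - α) * (α ^ q ^ 2 - α ^ q))

/-- The characteristic polynomial over `F` of an element `χ` of an extension of
degree `n`: the `(n/d)`-th power of the minimal polynomial of `χ`, where `d` is the
degree of the minimal polynomial. -/
noncomputable def charPolyOfElt (F : Type*) [Field F] {K : Type*} [Field K]
    [Algebra F K] (n : ℕ) (χ : K) : Polynomial F :=
  (minpoly F χ) ^ (n / (minpoly F χ).natDegree)

/-!
The projective transformation sending `α, α^q, α^(q²)` to `∞, 0, 1` sends `α^(q³)` to the cross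
ratio of `α`. Equal cross polynomials make the cross ratios of `α` and `β` conjugate over `F_q`, so
after replacing `α` by a conjugate root of `f` these cross ratios agree, and some `g ∈ GL₂(K)` sends
`α^(q^i)` to `β^(q^i)` for `i < 4`. Its Frobenius twist agrees with `g` on three of these points,
hence is a scalar multiple of `g`; dividing `g` by a nonzero entry therefore gives a matrix over
`F_q`. It sends a root of `f` to a root of `g`, and an irreducible form is determined up to a scalar
by one of its roots.
-/

section

open Matrix OnePoint
open scoped IntermediateField

section Mobius

variable {K : Type*} [Field K]

/-- The cross ratio of the points `x 0, x 1, x 2, x 3`, normalised to be the image of `x 3` under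
the projective transformation sending `x 0, x 1, x 2` to `∞, 0, 1`. It takes the value
`crossRatio q α` at the first four conjugates of `α`. -/
def fourPointCrossRatio (x : Fin 4 → K) : K :=
  ((x 3 - x 1) * (x 2 - x 0)) / ((x 3 - x 0) * (x 2 - x 1))

variable [DecidableEq K]

lemma exists_GL_smul_eq_fourPointCrossRatio {x : Fin 4 → K} (hx : Function.Injective x) :
    ∃ g : GL (Fin 2) K, ∀ i, g • (x i : OnePoint K) =
      (![∞, (0 : K), (1 : K), ↑(fourPointCrossRatio x)] : Fin 4 → OnePoint K) i := by
  have hne {i j : Fin 4} (hij : i ≠ j) : x i - x j ≠ 0 := sub_ne_zero.mpr (hx.ne hij)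
  have h01 : x 1 - x 0 ≠ 0 := hne (by decide)
  have h02 : x 2 - x 0 ≠ 0 := hne (by decide)
  have h03 : x 3 - x 0 ≠ 0 := hne (by decide)
  have h12 : x 2 - x 1 ≠ 0 := hne (by decide)
  let A : Matrix (Fin 2) (Fin 2) K :=
    !![x 2 - x 0, -(x 1 * (x 2 - x 0)); x 2 - x 1, -(x 0 * (x 2 - x 1))]
  have hdet : A.det = (x 2 - x 0) * (x 2 - x 1) * (x 1 - x 0) := by
    rw [det_fin_two_of]
    ring
  have hA : A.det ≠ 0 := hdet ▸ mul_ne_zero (mul_ne_zero h02 h12) h01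
  let g := GeneralLinearGroup.mkOfDetNeZero A hA
  have hpole : g • (x 0 : OnePoint K) = ∞ := by
    simp [g, A, smul_some_eq_ite, GeneralLinearGroup.mkOfDetNeZero, mul_comm]
  have hvalue (t : K) (ht : t - x 0 ≠ 0) : g • (t : OnePoint K) =
      ((((t - x 1) * (x 2 - x 0)) / ((t - x 0) * (x 2 - x 1)) : K) : OnePoint K) := by
    have hnum : (x 2 - x 0) * t + -(x 1 * (x 2 - x 0)) = (t - x 1) * (x 2 - x 0) := by ring
    have hden : (x 2 - x 1) * t + -(x 0 * (x 2 - x 1)) = (t - x 0) * (x 2 - x 1) := by ring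
    simp [g, A, smul_some_eq_ite, GeneralLinearGroup.mkOfDetNeZero, hnum, hden, ht, h12]
  refine ⟨g, fun i => ?_⟩
  fin_cases i
  · exact hpole
  · simp [hvalue _ h01]
  · simp [hvalue _ h02, mul_comm (x 2 - x 0), h02, h12]
  · exact hvalue _ h03

lemma exists_GL_smul_eq_of_fourPointCrossRatio_eq {x y : Fin 4 → K} (hx : Function.Injective x)
    (hy : Function.Injective y) (h : fourPointCrossRatio x = fourPointCrossRatio y) :
    ∃ g : GL (Fin 2) K, ∀ i, g • (x i : OnePoint K) = y i := by
  obtain ⟨a, ha⟩ := exists_GL_smul_eq_fourPointCrossRatio hx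
  obtain ⟨b, hb⟩ := exists_GL_smul_eq_fourPointCrossRatio hy
  exact ⟨b⁻¹ * a, fun i => by rw [mul_smul, ha, h, ← hb, inv_smul_smul]⟩

lemma exists_eq_mul_scalar_of_smul_eq {g h : GL (Fin 2) K} {x : Fin 3 → K}
    (hx : Function.Injective x)
    (hgh : ∀ i, g • (x i : OnePoint K) = h • (x i : OnePoint K)) :
    ∃ c : Kˣ, h = g * GeneralLinearGroup.scalar (Fin 2) c := by
  have hroot (i : Fin 3) : (g⁻¹ * h).fixpointPolynomial.eval (x i) = 0 := by
    rw [← Polynomial.coe_aeval_eq_eval]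
    refine GeneralLinearGroup.fixpointPolynomial_aeval_eq_zero_iff.mpr ?_
    rw [mul_smul, ← hgh, inv_smul_smul]
  have hdeg : (g⁻¹ * h).fixpointPolynomial.natDegree ≤ 2 := by
    unfold GeneralLinearGroup.fixpointPolynomial
    compute_degree
  have hzero := Polynomial.eq_zero_of_natDegree_lt_card_of_eval_eq_zero _ hx hroot
    (by simpa using Nat.lt_succ_of_le hdeg)
  have hcenter := GeneralLinearGroup.mem_center_iff_val_mem_range_scalar.mpr
    (GeneralLinearGroup.fixpointPolynomial_eq_zero_iff.mp hzero)
  rw [GeneralLinearGroup.center_eq_range_scalar] at hcenter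
  obtain ⟨c, hc⟩ := hcenter
  exact ⟨c, by rw [hc, mul_inv_cancel_left]⟩

lemma scalar_smul_onePoint (c : Kˣ) (x : OnePoint K) :
    GeneralLinearGroup.scalar (Fin 2) c • x = x := by
  cases x <;> simp [smul_some_eq_ite, smul_infty_eq_ite]

lemma mulVec_eq_smul_of_smul_eq {g : GL (Fin 2) K} {x y : K}
    (h : g • (x : OnePoint K) = y) :
    ∃ t : K, t ≠ 0 ∧ g.val *ᵥ ![x, 1] = t • ![y, 1] := by
  rw [smul_some_eq_ite] at h
  split_ifs at h with hden
  · simp at h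
  · refine ⟨_, hden, ?_⟩
    rw [OnePoint.coe_eq_coe, div_eq_iff hden] at h
    ext i
    fin_cases i
    · simpa [mul_comm] using h
    · simp

end Mobius

section SimpleExtension

variable {F K : Type*} [Field F] [Field K] [Algebra F K] {x y : K}

lemma isIntegral_of_natDegree_minpoly_pos (h : 0 < (minpoly F x).natDegree) : IsIntegral F x :=
  minpoly.ne_zero_iff.mp (Polynomial.ne_zero_of_natDegree_gt h)

lemma natDegree_minpoly_le_of_mem_adjoin (hx : IsIntegral F x) (hy : y ∈ F⟮x⟯) :
    (minpoly F y).natDegree ≤ (minpoly F x).natDegree := by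
  have := IntermediateField.adjoin.finiteDimensional hx
  rw [← IntermediateField.adjoin.finrank hx, ← IntermediateField.minpoly_eq (⟨y, hy⟩ : F⟮x⟯)]
  exact minpoly.natDegree_le _

lemma isIntegral_of_mem_adjoin_simple (hx : IsIntegral F x) (hy : y ∈ F⟮x⟯) : IsIntegral F y := by
  have := IntermediateField.adjoin.finiteDimensional hx
  exact (IsIntegral.of_finite F (⟨y, hy⟩ : F⟮x⟯)).map F⟮x⟯.val

lemma exists_algHom_apply_eq_of_minpoly_eq [Finite F] (hx : IsIntegral F x)
    (h : minpoly F x = minpoly F y) : ∃ φ : K →ₐ[F] K, φ x = y := by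
  cases nonempty_fintype F
  have := IntermediateField.adjoin.finiteDimensional hx
  have : Finite F⟮x⟯ := Module.finite_of_finite F
  have hy : y ∈ (minpoly F x).aroots K := by
    rw [Polynomial.mem_aroots]
    exact ⟨minpoly.ne_zero hx, h ▸ minpoly.aeval F y⟩
  let ψ : F⟮x⟯ →ₐ[F] K := (IntermediateField.algHomAdjoinIntegralEquiv F hx).symm ⟨y, hy⟩
  obtain ⟨i, hi⟩ := (FiniteField.bijective_frobeniusAlgEquivOfAlgebraic_pow F F⟮x⟯).surjective
    (Normal.algHomEquivAut F K F⟮x⟯ ψ)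
  refine ⟨FiniteField.frobeniusAlgHom F K ^ (i : ℕ), ?_⟩
  have hψ : ψ (IntermediateField.AdjoinSimple.gen F x) = y :=
    IntermediateField.algHomAdjoinIntegralEquiv_symm_apply_gen F hx _
  rw [← hψ, ← (Normal.algHomEquivAut F K F⟮x⟯).symm_apply_apply ψ, ← hi]
  simp [FiniteField.coe_frobeniusAlgHom, FiniteField.coe_frobeniusAlgEquivOfAlgebraic_iterate,
    pow_iterate]

end SimpleExtension

section FiniteField

variable {F K : Type*} [Field F] [Fintype F] [Field K] [Algebra F K]

lemma natDegree_minpoly_dvd_of_pow_eq_self {x : K} (hx : IsIntegral F x) {k : ℕ}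
    (h : x ^ Fintype.card F ^ k = x) : (minpoly F x).natDegree ∣ k := by
  refine (minpoly.irreducible hx).natDegree_dvd_of_dvd_X_pow_card_pow_sub_X (minpoly.dvd F x ?_)
  simp [h]

lemma injective_pow_card_pow (x : K) :
    Function.Injective fun i : Fin (minpoly F x).natDegree => x ^ Fintype.card F ^ (i : ℕ) := by
  refine .of_lt_imp_ne fun i j hij h => ?_
  have hx := isIntegral_of_natDegree_minpoly_pos i.pos
  have hfix : x ^ Fintype.card F ^ (j - i : ℕ) = x := by
    have hinj := (FiniteField.frobeniusAlgHom F K).toRingHom.injective.iterate i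
    simp only [AlgHom.toRingHom_eq_coe, RingHom.coe_coe, FiniteField.coe_frobeniusAlgHom,
      pow_iterate] at hinj
    refine hinj ?_
    simp only [← pow_mul, ← pow_add, Nat.sub_add_cancel hij.le, h]
  have := Nat.le_of_dvd (by lia) (natDegree_minpoly_dvd_of_pow_eq_self hx hfix)
  lia

lemma mem_range_algebraMap_of_pow_card_eq_self {x : K} (h : x ^ Fintype.card F = x) :
    x ∈ (algebraMap F K).range := by
  have hx : IsIntegral F x := by
    refine ⟨Polynomial.X ^ Fintype.card F - Polynomial.X,
      Polynomial.monic_X_pow_sub (by simpa using Fintype.one_lt_card), by simp [h]⟩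
  exact minpoly.natDegree_eq_one_iff.mp
    (Nat.dvd_one.mp (natDegree_minpoly_dvd_of_pow_eq_self hx (by simpa using h)))

lemma exists_map_eq_mul_scalar_of_map_frobenius_eq {n : Type*} [Fintype n]
    [DecidableEq n] [Nonempty n] {g : GL n K} {c : Kˣ}
    (h : g.map (FiniteField.frobeniusAlgHom F K : K →+* K) = g * GeneralLinearGroup.scalar n c) :
    ∃ (M : GL n F) (u : Kˣ), M.map (algebraMap F K) = g * GeneralLinearGroup.scalar n u := by
  have hentry (i j : n) : g i j ^ Fintype.card F = g i j * c := by
    simpa using congrArg (fun A : GL n K => A i j) h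
  obtain ⟨i, j, hij⟩ : ∃ i j, g i j ≠ 0 := by
    by_contra! hg
    exact g.ne_zero (Matrix.ext hg)
  have hfixed (k l : n) : g k l / g i j ∈ (algebraMap F K).range := by
    apply mem_range_algebraMap_of_pow_card_eq_self
    rw [div_pow, hentry, hentry, mul_div_mul_right _ _ c.ne_zero]
  choose A hA using hfixed
  obtain ⟨u, hu⟩ : ∃ u : Kˣ, (u : K) = (g i j)⁻¹ := ⟨.mk0 _ (inv_ne_zero hij), rfl⟩
  have hAmap : (Matrix.of A).map (algebraMap F K) =
      (g * GeneralLinearGroup.scalar n u : GL n K).val := by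
    ext k l
    simp [hA, hu, div_eq_mul_inv]
  have hdet : (Matrix.of A).det ≠ 0 := by
    rw [← map_ne_zero (algebraMap F K), RingHom.map_det, RingHom.mapMatrix_apply, hAmap]
    exact GeneralLinearGroup.det_ne_zero _
  exact ⟨GeneralLinearGroup.mkOfDetNeZero _ hdet, u, Units.ext hAmap⟩

end FiniteField

section CrossRatio

variable {F K L : Type*} [Field F] [Field K] [Field L] [Algebra F K]

lemma crossRatio_eq_fourPointCrossRatio (q : ℕ) (α : K) :
    crossRatio q α = fourPointCrossRatio fun i : Fin 4 => α ^ q ^ (i : ℕ) := by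
  simp [crossRatio, fourPointCrossRatio]

lemma map_crossRatio (φ : K →+* L) (q : ℕ) (α : K) :
    φ (crossRatio q α) = crossRatio q (φ α) := by
  simp only [crossRatio, map_div₀, map_mul, map_sub, map_pow]

lemma crossRatio_mem {S : Type*} [SetLike S K] [SubfieldClass S K] {s : S} (q : ℕ) {α : K}
    (hα : α ∈ s) : crossRatio q α ∈ s :=
  have h (k : ℕ) : α ^ k ∈ s := pow_mem hα k
  div_mem (mul_mem (sub_mem (h _) (h _)) (sub_mem (h _) hα))
    (mul_mem (sub_mem (h _) hα) (sub_mem (h _) (h _)))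

lemma minpoly_eq_of_charPolyOfElt_eq {x y : K} {m n : ℕ} (hx : IsIntegral F x)
    (hy : IsIntegral F y) (hm : (minpoly F x).natDegree ≤ m)
    (h : charPolyOfElt F m x = charPolyOfElt F n y) : minpoly F x = minpoly F y := by
  have hexp : m / (minpoly F x).natDegree ≠ 0 :=
    (Nat.div_pos hm (minpoly.natDegree_pos hx)).ne'
  have hdvd : minpoly F x ∣ charPolyOfElt F n y := h ▸ dvd_pow_self (minpoly F x) hexp
  exact Polynomial.eq_of_monic_of_associated (minpoly.monic hx) (minpoly.monic hy)
    ((minpoly.irreducible hx).associated_of_dvd (minpoly.irreducible hy)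
      ((minpoly.prime hx).dvd_of_dvd_pow hdvd))

end CrossRatio

section Dehom

variable {R A : Type*} [CommRing R] [CommRing A] [Algebra R A] {m : ℕ} {f : MvPolynomial (Fin 2) R}

lemma aeval_dehom (f : MvPolynomial (Fin 2) R) (x : A) :
    Polynomial.aeval x (dehom f) = aeval ![x, 1] f := by
  have : (Polynomial.aeval x).comp (aeval ![Polynomial.X, 1]) =
      (aeval ![x, 1] : MvPolynomial (Fin 2) R →ₐ[R] A) := by
    ext i; fin_cases i <;> simp
  exact DFunLike.congr_fun this f

lemma natDegree_dehom_le (hf : f.IsHomogeneous m) : (dehom f).natDegree ≤ m := by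
  simpa [dehom] using aeval_natDegree_le (n := 1) f hf.totalDegree_le
    ![Polynomial.X, 1] (by intro i; fin_cases i <;> simp [Polynomial.natDegree_X_le])

lemma homogenize_dehom (hf : f.IsHomogeneous m) : (dehom f).homogenize m = f :=
  Polynomial.homogenize_eq_of_isHomogeneous hf rfl

lemma eq_homogenize_dehom_mul_X_pow (hf : f.IsHomogeneous m) :
    f = (dehom f).homogenize (dehom f).natDegree * X 1 ^ (m - (dehom f).natDegree) := by
  rw [← Polynomial.homogenize_one, ← Polynomial.homogenize_mul _ _ le_rfl (by simp), mul_one,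
    Nat.add_sub_cancel' (natDegree_dehom_le hf), homogenize_dehom hf]

lemma isUnit_of_isUnit_homogenize {p : Polynomial R} {d : ℕ} (hd : p.natDegree ≤ d)
    (hp : IsUnit (p.homogenize d)) : IsUnit p := by
  simpa [Polynomial.aeval_homogenize_X_one p hd] using
    hp.map (aeval (![Polynomial.X, 1] : Fin 2 → Polynomial R))

variable [IsDomain R]

lemma natDegree_dehom (hirr : Irreducible f) (hf : f.IsHomogeneous m) (hm : 1 < m) :
    (dehom f).natDegree = m := by
  have hfactor := eq_homogenize_dehom_mul_X_pow hf
  rcases (hfactor ▸ hirr).isUnit_or_isUnit rfl with hunit | hunit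
  · have hzero : (dehom f).natDegree = 0 :=
      (Polynomial.isHomogeneous_homogenize (dehom f)).totalDegree hunit.ne_zero |>.symm.trans
        (isUnit_iff_totalDegree_of_isReduced.mp hunit).2
    rw [hfactor, irreducible_isUnit_mul hunit, hzero] at hirr
    exact absurd hirr (not_irreducible_pow (by lia))
  · by_contra hne
    have := natDegree_dehom_le hf
    exact X_prime.not_isUnit ((isUnit_pow_iff (by lia)).mp hunit)

lemma irreducible_dehom (hirr : Irreducible f) (hf : f.IsHomogeneous m) (hm : 1 < m) :
    Irreducible (dehom f) := by
  have hdeg := natDegree_dehom hirr hf hm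
  refine ⟨fun hunit => ?_, fun p r hpr => ?_⟩
  · have := Polynomial.natDegree_eq_zero_of_isUnit hunit
    lia
  · have hne : p * r ≠ 0 := by
      intro h
      rw [hpr, h, Polynomial.natDegree_zero] at hdeg
      lia
    have hmul := Polynomial.homogenize_mul p r le_rfl le_rfl
    rw [← Polynomial.natDegree_mul (left_ne_zero_of_mul hne) (right_ne_zero_of_mul hne), ← hpr,
      hdeg, homogenize_dehom hf] at hmul
    exact (hirr.isUnit_or_isUnit hmul).imp (isUnit_of_isUnit_homogenize le_rfl)
      (isUnit_of_isUnit_homogenize le_rfl)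

end Dehom

section BinaryFormRoot

variable {F K : Type*} [Field F] [Field K] [Algebra F K] {m n : ℕ} {f g : MvPolynomial (Fin 2) F}

lemma exists_dehom_eq_C_mul_minpoly (hirr : Irreducible f) (hf : f.IsHomogeneous m) (hm : 1 < m)
    {α : K} (hα : Polynomial.aeval α (dehom f) = 0) :
    ∃ c : Fˣ, dehom f = Polynomial.C (c : F) * minpoly F α := by
  have hd := irreducible_dehom hirr hf hm
  have hlc := Polynomial.leadingCoeff_ne_zero.mpr hd.ne_zero
  refine ⟨.mk0 _ hlc, ?_⟩
  rw [← minpoly.eq_of_irreducible hd hα, mul_left_comm, Units.val_mk0, ← Polynomial.C_mul,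
    mul_inv_cancel₀ hlc, Polynomial.C_1, mul_one]

lemma natDegree_minpoly_of_aeval_dehom (hirr : Irreducible f) (hf : f.IsHomogeneous m)
    (hm : 1 < m) {α : K} (hα : Polynomial.aeval α (dehom f) = 0) :
    (minpoly F α).natDegree = m := by
  obtain ⟨c, hc⟩ := exists_dehom_eq_C_mul_minpoly hirr hf hm hα
  rw [← natDegree_dehom hirr hf hm, hc, Polynomial.natDegree_C_mul c.ne_zero]

lemma exists_eq_smul_of_common_root (hfirr : Irreducible f) (hf : f.IsHomogeneous m) (hm : 1 < m)
    (hgirr : Irreducible g) (hg : g.IsHomogeneous n) (hn : 1 < n) {α : K}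
    (hfα : Polynomial.aeval α (dehom f) = 0) (hgα : Polynomial.aeval α (dehom g) = 0) :
    ∃ e : Fˣ, f = (e : F) • g := by
  obtain rfl : m = n := (natDegree_minpoly_of_aeval_dehom hfirr hf hm hfα).symm.trans
    (natDegree_minpoly_of_aeval_dehom hgirr hg hn hgα)
  obtain ⟨a, ha⟩ := exists_dehom_eq_C_mul_minpoly hfirr hf hm hfα
  obtain ⟨b, hb⟩ := exists_dehom_eq_C_mul_minpoly hgirr hg hn hgα
  have hab : dehom f = ((a / b : Fˣ) : F) • dehom g := by
    rw [ha, hb, Polynomial.smul_eq_C_mul, ← mul_assoc, ← Polynomial.C_mul, ← Units.val_mul,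
      div_mul_cancel]
  refine ⟨a / b, ?_⟩
  rw [← homogenize_dehom hf, hab, Polynomial.homogenize_smul, homogenize_dehom hg]

end BinaryFormRoot

section Subst

lemma aeval_smul_of_isHomogeneous {ι R A : Type*} [CommSemiring R] [CommSemiring A] [Algebra R A]
    {n : ℕ} {f : MvPolynomial ι R} (hf : f.IsHomogeneous n) (t : A) (v : ι → A) :
    aeval (t • v) f = t ^ n * aeval v f := by
  simp only [aeval_def, eval₂_eq, Finset.mul_sum]
  refine Finset.sum_congr rfl fun d hd => ?_
  simp only [Pi.smul_apply, smul_eq_mul, mul_pow, Finset.prod_mul_distrib,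
    Finset.prod_pow_eq_pow_sum, ← hf.degree_eq_sum_deg_support hd]
  ring

variable {F : Type*} [Field F]

lemma substM_eq_aeval (N : Matrix (Fin 2) (Fin 2) F) (f : MvPolynomial (Fin 2) F) :
    substM N f = aeval (N.map (algebraMap F (MvPolynomial (Fin 2) F)) *ᵥ X) f := by
  have : (fun i => C (N i 0) * X 0 + C (N i 1) * X 1) =
      N.map (algebraMap F (MvPolynomial (Fin 2) F)) *ᵥ X := by
    ext1 i
    simp [mulVec, dotProduct, algebraMap_eq]
  rw [substM, this]

lemma aeval_substM {A : Type*} [CommRing A] [Algebra F A] (N : Matrix (Fin 2) (Fin 2) F)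
    (f : MvPolynomial (Fin 2) F) (v : Fin 2 → A) :
    aeval v (substM N f) = aeval (N.map (algebraMap F A) *ᵥ v) f := by
  have : (aeval v).comp (aeval fun i => C (N i 0) * X 0 + C (N i 1) * X 1) =
      (aeval (N.map (algebraMap F A) *ᵥ v) : MvPolynomial (Fin 2) F →ₐ[F] A) := by
    ext i; fin_cases i <;> simp
  exact DFunLike.congr_fun this f

lemma isHomogeneous_substM {m : ℕ} {f : MvPolynomial (Fin 2) F} (hf : f.IsHomogeneous m)
    (N : Matrix (Fin 2) (Fin 2) F) : (substM N f).IsHomogeneous m := by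
  simpa [substM] using hf.aeval (n := 1) _ fun i =>
    (isHomogeneous_C_mul_X (N i 0) 0).add (isHomogeneous_C_mul_X (N i 1) 1)

lemma substM_one (f : MvPolynomial (Fin 2) F) : substM 1 f = f := by
  rw [substM_eq_aeval, Matrix.map_one _ (map_zero _) (map_one _), one_mulVec, aeval_X_left_apply]

lemma substM_substM (M N : Matrix (Fin 2) (Fin 2) F) (f : MvPolynomial (Fin 2) F) :
    substM M (substM N f) = substM (N * M) f := by
  rw [substM_eq_aeval M, aeval_substM, substM_eq_aeval, mulVec_mulVec, ← Matrix.map_mul]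

lemma irreducible_substM {N : Matrix (Fin 2) (Fin 2) F} (hN : IsUnit N.det)
    {f : MvPolynomial (Fin 2) F} (hf : Irreducible f) : Irreducible (substM N f) := by
  let e : MvPolynomial (Fin 2) F ≃* MvPolynomial (Fin 2) F :=
    { toFun := substM N
      invFun := substM N⁻¹
      left_inv f := by rw [substM_substM, mul_nonsing_inv N hN, substM_one]
      right_inv f := by rw [substM_substM, nonsing_inv_mul N hN, substM_one]
      map_mul' := map_mul (aeval _) }
  exact (MulEquiv.irreducible_iff e).mpr hf

lemma aeval_dehom_substM_adjugate_eq_zero {K : Type*} [Field K] [Algebra F K] [DecidableEq K]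
    {m : ℕ} {f : MvPolynomial (Fin 2) F} (hf : f.IsHomogeneous m) {M : GL (Fin 2) F} {x y : K}
    (hM : M.map (algebraMap F K) • (x : OnePoint K) = y)
    (hx : Polynomial.aeval x (dehom f) = 0) :
    Polynomial.aeval y (dehom (substM (adjugate (M : Matrix (Fin 2) (Fin 2) F)) f)) = 0 := by
  obtain ⟨t, ht, hMx⟩ := mulVec_eq_smul_of_smul_eq hM
  have hN := isHomogeneous_substM hf (adjugate (M : Matrix (Fin 2) (Fin 2) F))
  have hadj : M.val.adjugate.map (algebraMap F K) *ᵥ (t • ![y, 1]) =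
      algebraMap F K M.val.det • ![x, 1] := by
    rw [← hMx]
    change M.val.adjugate.map (algebraMap F K) *ᵥ (M.val.map (algebraMap F K) *ᵥ ![x, 1]) = _
    rw [mulVec_mulVec, ← Matrix.map_mul, adjugate_mul]
    simp [Matrix.map_smul']
  rw [aeval_dehom] at hx ⊢
  refine (mul_eq_zero.mp ?_).resolve_left (pow_ne_zero m ht)
  rw [← aeval_smul_of_isHomogeneous hN, aeval_substM, hadj, aeval_smul_of_isHomogeneous hf, hx,
    mul_zero]

end Subst

section Descent

variable {F K : Type*} [Field F] [Fintype F] [Field K] [Algebra F K]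

lemma exists_GL_smul_eq_of_crossRatio_eq [DecidableEq K] {α β : K}
    (hα : 4 ≤ (minpoly F α).natDegree) (hβ : 4 ≤ (minpoly F β).natDegree)
    (h : crossRatio (Fintype.card F) α = crossRatio (Fintype.card F) β) :
    ∃ M : GL (Fin 2) F, M.map (algebraMap F K) • (α : OnePoint K) = β := by
  let conj (z : K) (i : Fin 4) : K := z ^ Fintype.card F ^ (i : ℕ)
  let σ : K →+* K := FiniteField.frobeniusAlgHom F K
  have hσ (z : K) (i : Fin 3) : σ (conj z i.castSucc) = conj z i.succ := by
    simp [σ, conj, ← pow_mul, pow_succ]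
  have hinj {z : K} (hz : 4 ≤ (minpoly F z).natDegree) : Function.Injective (conj z) :=
    (injective_pow_card_pow z).comp (Fin.castLE_injective hz)
  rw [crossRatio_eq_fourPointCrossRatio, crossRatio_eq_fourPointCrossRatio] at h
  obtain ⟨g, hg⟩ := exists_GL_smul_eq_of_fourPointCrossRatio_eq (hinj hα) (hinj hβ) h
  have htwist (i : Fin 3) : g.map σ • (conj α i.succ : OnePoint K) = conj β i.succ := by
    rw [← hσ, ← hσ]
    exact (OnePoint.map_smul σ g _).symm.trans (congrArg (OnePoint.map σ) (hg i.castSucc))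
  obtain ⟨c, hc⟩ := exists_eq_mul_scalar_of_smul_eq ((hinj hα).comp (Fin.succ_injective 3))
    fun i => (hg i.succ).trans (htwist i).symm
  obtain ⟨M, u, hM⟩ := exists_map_eq_mul_scalar_of_map_frobenius_eq hc
  refine ⟨M, ?_⟩
  rw [hM, mul_smul, scalar_smul_onePoint]
  simpa [conj] using hg 0

lemma exists_algHom_crossRatio_eq {α β : K} {m n : ℕ} (hα : IsIntegral F α)
    (hβ : IsIntegral F β) (hm : (minpoly F α).natDegree ≤ m)
    (h : charPolyOfElt F m (crossRatio (Fintype.card F) α) =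
      charPolyOfElt F n (crossRatio (Fintype.card F) β)) :
    ∃ φ : K →ₐ[F] K, crossRatio (Fintype.card F) (φ α) = crossRatio (Fintype.card F) β := by
  have hχα := crossRatio_mem (Fintype.card F) (IntermediateField.mem_adjoin_simple_self F α)
  have hχβ := crossRatio_mem (Fintype.card F) (IntermediateField.mem_adjoin_simple_self F β)
  have hint := isIntegral_of_mem_adjoin_simple hα hχα
  obtain ⟨φ, hφ⟩ := exists_algHom_apply_eq_of_minpoly_eq hint
    (minpoly_eq_of_charPolyOfElt_eq hint (isIntegral_of_mem_adjoin_simple hβ hχβ)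
      ((natDegree_minpoly_le_of_mem_adjoin hα hχα).trans hm) h)
  exact ⟨φ, (map_crossRatio (φ : K →+* K) _ α).symm.trans hφ⟩

end Descent

theorem cross_polynomial_determines_orbit_general
    {F : Type*} [Field F] [Fintype F] {K : Type*} [Field K] [Algebra F K]
    {m n : ℕ} (hm : 4 ≤ m) (hn : 4 ≤ n) {f g : MvPolynomial (Fin 2) F}
    (hfhom : f.IsHomogeneous m) (hghom : g.IsHomogeneous n)
    (hfirr : Irreducible f) (hgirr : Irreducible g) {α β : K}
    (hα : Polynomial.aeval α (dehom f) = 0) (hβ : Polynomial.aeval β (dehom g) = 0)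
    (hcross : charPolyOfElt F m (crossRatio (Fintype.card F) α) =
      charPolyOfElt F n (crossRatio (Fintype.card F) β)) :
    ∃ M : GL (Fin 2) F, ∃ e : Fˣ,
      substM (Matrix.adjugate (M : Matrix (Fin 2) (Fin 2) F)) f = (e : F) • g := by
  classical
  have hdegα := natDegree_minpoly_of_aeval_dehom hfirr hfhom (by lia) hα
  have hdegβ := natDegree_minpoly_of_aeval_dehom hgirr hghom (by lia) hβ
  obtain ⟨φ, hφ⟩ := exists_algHom_crossRatio_eq (isIntegral_of_natDegree_minpoly_pos (by lia))
    (isIntegral_of_natDegree_minpoly_pos (by lia)) hdegα.le hcross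
  obtain ⟨M, hM⟩ := exists_GL_smul_eq_of_crossRatio_eq (α := φ α)
    (by rwa [minpoly.algHom_eq φ φ.injective, hdegα]) (hn.trans_eq hdegβ.symm) hφ
  have hroot : Polynomial.aeval (φ α) (dehom f) = 0 := by
    rw [Polynomial.aeval_algHom_apply, hα, map_zero]
  have hdet : IsUnit (adjugate M.val).det := by
    simpa [det_adjugate] using M.det_ne_zero
  exact ⟨M, exists_eq_smul_of_common_root (irreducible_substM hdet hfirr)
    (isHomogeneous_substM hfhom _) (by lia) hgirr hghom (by lia)
    (aeval_dehom_substM_adjugate_eq_zero hfhom hM hroot) hβ⟩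

end

/-- Let `q` be a prime power, `F` the field with `q` elements, and `f, g` monic
irreducible homogeneous bivariate polynomials over `F` of degrees `m, n ≥ 4`.  If
`Cross(f) = Cross(g)` — i.e., for roots `α` of `f(x,1)` and `β` of `g(x,1)` in an
algebraic closure `K` of `F`, the characteristic polynomials over `F` of the cross
ratios of their Frobenius conjugates agree — then `f` and `g` lie in the same
`PGL₂(F)`-orbit: some scalar multiple of `g` equals `f(dx−by, −cx+ay)` for an
invertible matrix `[[a,b],[c,d]]`. -/
theorem cross_polynomial_determines_orbit
    {F : Type*} [Field F] [Fintype F] (q : ℕ) (hq : Fintype.card F = q)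
    {K : Type*} [Field K] [Algebra F K] [IsAlgClosure F K]
    (m n : ℕ) (hm : 4 ≤ m) (hn : 4 ≤ n)
    (f g : MvPolynomial (Fin 2) F)
    (hfhom : f.IsHomogeneous m) (hghom : g.IsHomogeneous n)
    (hfmonic : MonicHom f m) (hgmonic : MonicHom g n)
    (hfirr : Irreducible f) (hgirr : Irreducible g)
    (α β : K)
    (hα : Polynomial.aeval α (dehom f) = 0)
    (hβ : Polynomial.aeval β (dehom g) = 0)
    (hcross : charPolyOfElt F m (crossRatio q α) = charPolyOfElt F n (crossRatio q β)) :
    ∃ M : GL (Fin 2) F, ∃ e : Fˣ,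
      substM (Matrix.adjugate (M : Matrix (Fin 2) (Fin 2) F)) f = (e : F) • g := by
  subst hq
  exact cross_polynomial_determines_orbit_general hm hn hfhom hghom hfirr hgirr hα hβ hcross
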